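/- arXiv:1311.2852 — 4 statements merged into one kernel-verified Lean document; each statement's English description precedes it below -/
import Mathlib

section
/- Let P be a joint distribution on 𝒳 × 𝒴 × 𝒵 and let Q_P ∈ Δ_P. Then the following five conditions are equivalent: (1) Q_P minimizes MI_Q(X:Y|Z) over Δ_P; (2) Q_P minimizes MI_Q(X:Z|Y) over Δ_P; (3) Q_P minimizes MI_Q(X:(Y,Z)) over Δ_P; (4) Q_P maximizes the co-information CoI_Q(X;Y;Z) over Δ_P; (5) Q_P maximizes the conditional entropy H_Q(X|Y,Z) over Δ_P. -/
/-!
By the chain rule, each of `MI(X:Y|Z)`, `MI(X:Z|Y)` and `MI(X:(Y,Z))` equals a conditional entropy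
of `X` (given `Z`, given `Y`, or given nothing) minus `H(X|Y,Z)`. The first term depends only on the
`(X,Y)` and `(X,Z)` marginals, so it is constant on `Δ_P`; the same holds for `MI(X:Y)` in the
co-information. Hence on `Δ_P` all five objectives agree with `± H(X|Y,Z)` up to constants.

The chain rules are all instances of `sum_log_add_hX_YZ`, which splits the logarithm on the support
of `Q`, where every marginal is positive; off the support the factor `Q (x, y, z) = 0` kills the term.
-/

open scoped BigOperators
open Real

namespace PID

variable {𝒳 𝒴 𝒵 : Type*} [Fintype 𝒳] [Fintype 𝒴] [Fintype 𝒵]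

/-- A joint distribution on `𝒳 × 𝒴 × 𝒵`: nonnegative values summing to 1. -/
def IsDist (P : 𝒳 × 𝒴 × 𝒵 → ℝ) : Prop :=
  (∀ p, 0 ≤ P p) ∧ ∑ p, P p = 1

noncomputable def margX (P : 𝒳 × 𝒴 × 𝒵 → ℝ) (x : 𝒳) : ℝ := ∑ y, ∑ z, P (x, y, z)
noncomputable def margY (P : 𝒳 × 𝒴 × 𝒵 → ℝ) (y : 𝒴) : ℝ := ∑ x, ∑ z, P (x, y, z)
noncomputable def margZ (P : 𝒳 × 𝒴 × 𝒵 → ℝ) (z : 𝒵) : ℝ := ∑ x, ∑ y, P (x, y, z)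
noncomputable def margXY (P : 𝒳 × 𝒴 × 𝒵 → ℝ) (x : 𝒳) (y : 𝒴) : ℝ := ∑ z, P (x, y, z)
noncomputable def margXZ (P : 𝒳 × 𝒴 × 𝒵 → ℝ) (x : 𝒳) (z : 𝒵) : ℝ := ∑ y, P (x, y, z)
noncomputable def margYZ (P : 𝒳 × 𝒴 × 𝒵 → ℝ) (y : 𝒴) (z : 𝒵) : ℝ := ∑ x, P (x, y, z)

/-- Mutual information `MI(X:Y)`. -/
noncomputable def miXY (P : 𝒳 × 𝒴 × 𝒵 → ℝ) : ℝ :=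
  ∑ x, ∑ y, margXY P x y * Real.log (margXY P x y / (margX P x * margY P y))

/-- Mutual information `MI(X:Z)`. -/
noncomputable def miXZ (P : 𝒳 × 𝒴 × 𝒵 → ℝ) : ℝ :=
  ∑ x, ∑ z, margXZ P x z * Real.log (margXZ P x z / (margX P x * margZ P z))

/-- Mutual information `MI(Y:Z)`. -/
noncomputable def miYZ (P : 𝒳 × 𝒴 × 𝒵 → ℝ) : ℝ :=
  ∑ y, ∑ z, margYZ P y z * Real.log (margYZ P y z / (margY P y * margZ P z))

/-- Mutual information `MI(X:(Y,Z))`. -/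
noncomputable def miXYZ (P : 𝒳 × 𝒴 × 𝒵 → ℝ) : ℝ :=
  ∑ x, ∑ y, ∑ z, P (x, y, z) * Real.log (P (x, y, z) / (margX P x * margYZ P y z))

/-- Conditional mutual information `MI(X:Y|Z)`. -/
noncomputable def miXY_Z (P : 𝒳 × 𝒴 × 𝒵 → ℝ) : ℝ :=
  ∑ x, ∑ y, ∑ z, P (x, y, z) *
    Real.log (P (x, y, z) * margZ P z / (margXZ P x z * margYZ P y z))

/-- Conditional mutual information `MI(X:Z|Y)`. -/
noncomputable def miXZ_Y (P : 𝒳 × 𝒴 × 𝒵 → ℝ) : ℝ :=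
  ∑ x, ∑ y, ∑ z, P (x, y, z) *
    Real.log (P (x, y, z) * margY P y / (margXY P x y * margYZ P y z))

/-- Conditional mutual information `MI(Y:Z|X)`. -/
noncomputable def miYZ_X (P : 𝒳 × 𝒴 × 𝒵 → ℝ) : ℝ :=
  ∑ x, ∑ y, ∑ z, P (x, y, z) *
    Real.log (P (x, y, z) * margX P x / (margXY P x y * margXZ P x z))

/-- Conditional entropy `H(X|Y,Z)`. -/
noncomputable def hX_YZ (P : 𝒳 × 𝒴 × 𝒵 → ℝ) : ℝ :=
  -∑ x, ∑ y, ∑ z, P (x, y, z) * Real.log (P (x, y, z) / margYZ P y z)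

/-- Conditional entropy `H(X|Z)`. -/
noncomputable def hX_Z (P : 𝒳 × 𝒴 × 𝒵 → ℝ) : ℝ :=
  -∑ x, ∑ z, margXZ P x z * Real.log (margXZ P x z / margZ P z)

/-- Conditional entropy `H(Y|Z)`. -/
noncomputable def hY_Z (P : 𝒳 × 𝒴 × 𝒵 → ℝ) : ℝ :=
  -∑ y, ∑ z, margYZ P y z * Real.log (margYZ P y z / margZ P z)

/-- Conditional entropy `H(Z|Y)`. -/
noncomputable def hZ_Y (P : 𝒳 × 𝒴 × 𝒵 → ℝ) : ℝ :=
  -∑ y, ∑ z, margYZ P y z * Real.log (margYZ P y z / margY P y)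

/-- Co-information `CoI(X;Y;Z) = MI(X:Y) − MI(X:Y|Z)`. -/
noncomputable def coI (P : 𝒳 × 𝒴 × 𝒵 → ℝ) : ℝ := miXY P - miXY_Z P

/-- `Δ_P`: the joint distributions with the same pair marginals as `P` on `(X,Y)` and `(X,Z)`. -/
def ΔP (P : 𝒳 × 𝒴 × 𝒵 → ℝ) : Set (𝒳 × 𝒴 × 𝒵 → ℝ) :=
  {Q | IsDist Q ∧ (∀ x y, margXY Q x y = margXY P x y) ∧ ∀ x z, margXZ Q x z = margXZ P x z}

/-- `ŨI(X:Y∖Z) = min_{Q ∈ Δ_P} MI_Q(X:Y|Z)`. -/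
noncomputable def UIY (P : 𝒳 × 𝒴 × 𝒵 → ℝ) : ℝ := sInf (miXY_Z '' ΔP P)

/-- `ŨI(X:Z∖Y) = min_{Q ∈ Δ_P} MI_Q(X:Z|Y)`. -/
noncomputable def UIZ (P : 𝒳 × 𝒴 × 𝒵 → ℝ) : ℝ := sInf (miXZ_Y '' ΔP P)

/-- `S̃I(X:Y;Z) = max_{Q ∈ Δ_P} CoI_Q(X;Y;Z)`. -/
noncomputable def SI (P : 𝒳 × 𝒴 × 𝒵 → ℝ) : ℝ := sSup (coI '' ΔP P)

/-- `C̃I(X:Y;Z) = MI_P(X:(Y,Z)) − min_{Q ∈ Δ_P} MI_Q(X:(Y,Z))`. -/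
noncomputable def CI (P : 𝒳 × 𝒴 × 𝒵 → ℝ) : ℝ := miXYZ P - sInf (miXYZ '' ΔP P)

section Positivity

variable {Q : 𝒳 × 𝒴 × 𝒵 → ℝ} {x : 𝒳} {y : 𝒴} {z : 𝒵}

lemma margXY_pos (h : ∀ p, 0 ≤ Q p) (hq : 0 < Q (x, y, z)) : 0 < margXY Q x y :=
  hq.trans_le <| Finset.single_le_sum (f := fun z => Q (x, y, z)) (fun _ _ => h _)
    (Finset.mem_univ z)

lemma margXZ_pos (h : ∀ p, 0 ≤ Q p) (hq : 0 < Q (x, y, z)) : 0 < margXZ Q x z :=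
  hq.trans_le <| Finset.single_le_sum (f := fun y => Q (x, y, z)) (fun _ _ => h _)
    (Finset.mem_univ y)

lemma margYZ_pos (h : ∀ p, 0 ≤ Q p) (hq : 0 < Q (x, y, z)) : 0 < margYZ Q y z :=
  hq.trans_le <| Finset.single_le_sum (f := fun x => Q (x, y, z)) (fun _ _ => h _)
    (Finset.mem_univ x)

lemma margX_pos (h : ∀ p, 0 ≤ Q p) (hq : 0 < Q (x, y, z)) : 0 < margX Q x :=
  (margXY_pos h hq).trans_le <| Finset.single_le_sum (f := fun y => margXY Q x y)
    (fun _ _ => Finset.sum_nonneg fun _ _ => h _) (Finset.mem_univ y)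

lemma margY_pos (h : ∀ p, 0 ≤ Q p) (hq : 0 < Q (x, y, z)) : 0 < margY Q y :=
  (margXY_pos h hq).trans_le <| Finset.single_le_sum (f := fun x => margXY Q x y)
    (fun _ _ => Finset.sum_nonneg fun _ _ => h _) (Finset.mem_univ x)

lemma margZ_pos (h : ∀ p, 0 ≤ Q p) (hq : 0 < Q (x, y, z)) : 0 < margZ Q z :=
  (margXZ_pos h hq).trans_le <| Finset.single_le_sum (f := fun x => margXZ Q x z)
    (fun _ _ => Finset.sum_nonneg fun _ _ => h _) (Finset.mem_univ x)

end Positivity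

/-- Common form of the chain rules: a factor `c / d` inside the logarithm that is positive on the
support of `Q` splits off from the integrand of `-H(X|Y,Z)`. -/
lemma sum_log_add_hX_YZ {Q : 𝒳 × 𝒴 × 𝒵 → ℝ} (h : ∀ p, 0 ≤ Q p) (c d : 𝒳 → 𝒴 → 𝒵 → ℝ)
    (hc : ∀ x y z, 0 < Q (x, y, z) → 0 < c x y z)
    (hd : ∀ x y z, 0 < Q (x, y, z) → 0 < d x y z) :
    ∑ x, ∑ y, ∑ z, Q (x, y, z) * Real.log (Q (x, y, z) * c x y z / (d x y z * margYZ Q y z))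
      + hX_YZ Q = ∑ x, ∑ y, ∑ z, Q (x, y, z) * Real.log (c x y z / d x y z) := by
  rw [hX_YZ, ← sub_eq_add_neg]
  simp only [← Finset.sum_sub_distrib]
  refine Finset.sum_congr rfl fun x _ => Finset.sum_congr rfl fun y _ =>
    Finset.sum_congr rfl fun z _ => ?_
  rcases (h (x, y, z)).eq_or_lt with hq | hq
  · simp [← hq]
  · have h1 := hc x y z hq
    have h2 := hd x y z hq
    have h3 := margYZ_pos h hq
    rw [Real.log_div (by positivity) (by positivity), Real.log_mul (by positivity) (by positivity),
      Real.log_mul (by positivity) (by positivity), Real.log_div (by positivity) (by positivity),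
      Real.log_div (by positivity) (by positivity)]
    ring

/-- `MI(X:Y|Z) + H(X|Y,Z) = H(X|Z)`. -/
lemma miXY_Z_add_hX_YZ {Q : 𝒳 × 𝒴 × 𝒵 → ℝ} (h : ∀ p, 0 ≤ Q p) :
    miXY_Z Q + hX_YZ Q = ∑ x, ∑ z, margXZ Q x z * Real.log (margZ Q z / margXZ Q x z) := by
  rw [miXY_Z, sum_log_add_hX_YZ h (fun _ _ z => margZ Q z) (fun x _ z => margXZ Q x z)
    (fun _ _ _ => margZ_pos h) (fun _ _ _ => margXZ_pos h)]
  refine Finset.sum_congr rfl fun x _ => ?_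
  rw [Finset.sum_comm]
  simp only [margXZ, Finset.sum_mul]

/-- `MI(X:Z|Y) + H(X|Y,Z) = H(X|Y)`. -/
lemma miXZ_Y_add_hX_YZ {Q : 𝒳 × 𝒴 × 𝒵 → ℝ} (h : ∀ p, 0 ≤ Q p) :
    miXZ_Y Q + hX_YZ Q = ∑ x, ∑ y, margXY Q x y * Real.log (margY Q y / margXY Q x y) := by
  rw [miXZ_Y, sum_log_add_hX_YZ h (fun _ y _ => margY Q y) (fun x y _ => margXY Q x y)
    (fun _ _ _ => margY_pos h) (fun _ _ _ => margXY_pos h)]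
  simp only [margXY, Finset.sum_mul]

/-- `MI(X:(Y,Z)) + H(X|Y,Z) = H(X)`. -/
lemma miXYZ_add_hX_YZ {Q : 𝒳 × 𝒴 × 𝒵 → ℝ} (h : ∀ p, 0 ≤ Q p) :
    miXYZ Q + hX_YZ Q = ∑ x, margX Q x * Real.log (1 / margX Q x) := by
  have := sum_log_add_hX_YZ h (fun _ _ _ => 1) (fun x _ _ => margX Q x)
    (fun _ _ _ _ => one_pos) (fun _ _ _ => margX_pos h)
  simp only [mul_one] at this
  rw [miXYZ, this]
  simp only [margX, Finset.sum_mul]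

section Marginals

variable {P Q : 𝒳 × 𝒴 × 𝒵 → ℝ}

lemma margXY_eq (hQ : Q ∈ ΔP P) : margXY Q = margXY P := by
  funext x y; exact hQ.2.1 x y

lemma margXZ_eq (hQ : Q ∈ ΔP P) : margXZ Q = margXZ P := by
  funext x z; exact hQ.2.2 x z

lemma margX_eq (hQ : Q ∈ ΔP P) : margX Q = margX P := by
  funext x; exact Finset.sum_congr rfl fun y _ => hQ.2.1 x y

lemma margY_eq (hQ : Q ∈ ΔP P) : margY Q = margY P := by
  funext y; exact Finset.sum_congr rfl fun x _ => hQ.2.1 x y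

lemma margZ_eq (hQ : Q ∈ ΔP P) : margZ Q = margZ P := by
  funext z; exact Finset.sum_congr rfl fun x _ => hQ.2.2 x z

end Marginals

/-- the five optimization problems over `Δ_P` are equivalent. -/
theorem stmt0 [Nonempty 𝒳] [Nonempty 𝒴] [Nonempty 𝒵]
    (P QP : 𝒳 × 𝒴 × 𝒵 → ℝ) (hP : IsDist P) (hQP : QP ∈ ΔP P) :
    List.TFAE [
      ∀ Q ∈ ΔP P, miXY_Z QP ≤ miXY_Z Q,
      ∀ Q ∈ ΔP P, miXZ_Y QP ≤ miXZ_Y Q,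
      ∀ Q ∈ ΔP P, miXYZ QP ≤ miXYZ Q,
      ∀ Q ∈ ΔP P, coI Q ≤ coI QP,
      ∀ Q ∈ ΔP P, hX_YZ Q ≤ hX_YZ QP] := by
  -- On `Δ_P` the three sums of an objective with `H(X|Y,Z)`, and `MI(X:Y)`, are constant.
  have key : ∀ Q ∈ ΔP P,
      miXY_Z Q + hX_YZ Q = miXY_Z QP + hX_YZ QP ∧
      miXZ_Y Q + hX_YZ Q = miXZ_Y QP + hX_YZ QP ∧
      miXYZ Q + hX_YZ Q = miXYZ QP + hX_YZ QP ∧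
      miXY Q = miXY QP := by
    intro Q hQ
    simp only [miXY_Z_add_hX_YZ hQ.1.1, miXY_Z_add_hX_YZ hQP.1.1, miXZ_Y_add_hX_YZ hQ.1.1,
      miXZ_Y_add_hX_YZ hQP.1.1, miXYZ_add_hX_YZ hQ.1.1, miXYZ_add_hX_YZ hQP.1.1, miXY,
      margXY_eq hQ, margXY_eq hQP, margXZ_eq hQ, margXZ_eq hQP, margX_eq hQ, margX_eq hQP,
      margY_eq hQ, margY_eq hQP, margZ_eq hQ, margZ_eq hQP, and_self]
  tfae_have 1 ↔ 5 := forall₂_congr fun Q hQ => by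
    obtain ⟨h, -⟩ := key Q hQ
    constructor <;> intro <;> linarith
  tfae_have 2 ↔ 5 := forall₂_congr fun Q hQ => by
    obtain ⟨-, h, -⟩ := key Q hQ
    constructor <;> intro <;> linarith
  tfae_have 3 ↔ 5 := forall₂_congr fun Q hQ => by
    obtain ⟨-, -, h, -⟩ := key Q hQ
    constructor <;> intro <;> linarith
  tfae_have 4 ↔ 5 := forall₂_congr fun Q hQ => by
    obtain ⟨h, -, -, h'⟩ := key Q hQ
    unfold coI
    constructor <;> intro <;> linarith
  tfae_finish

end PID
end

section
/- For every joint distribution P on 𝒳 × 𝒴 × 𝒵, the four quantities ŨI(X:Y∖Z), ŨI(X:Z∖Y), S̃I(X:Y;Z) and C̃I(X:Y;Z) are all nonnegative. -/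
/-!
All four claims reduce to Gibbs' inequality `∑ a = 1`, `∑ b ≤ 1`, `a ≪ b` ⟹ `0 ≤ ∑ a log (a / b)`,
which itself follows from `log t ≤ t - 1` applied to `t = b / a` (`gibbs`). It yields the
nonnegativity of mutual information (`mi_nonneg`) and of conditional mutual information
(`cmi_nonneg`).

* The unique informations are infima of sets of nonnegative numbers.
* For the complementary information, `P` itself lies in `Δ_P`, and `MI_Q(X:(Y,Z))` is bounded below
  by `0` on `Δ_P`.
* For the shared information, let `Q₀(x,y,z) = P(x,y) P(x,z) / P(x)` (`condIndep`), the element of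
  `Δ_P` making `Y` and `Z` independent given `X`. Then
  `CoI_{Q₀}(X;Y;Z) = MI_{Q₀}(Y:Z) - MI_{Q₀}(Y:Z|X) = MI_{Q₀}(Y:Z) ≥ 0`.
  No upper bound on `CoI` is needed, since the real `sSup` of an unbounded set is `0`.
-/


open scoped BigOperators
open Real

namespace PID

variable {𝒳 𝒴 𝒵 : Type*} [Fintype 𝒳] [Fintype 𝒴] [Fintype 𝒵]

/-! ### Gibbs' inequality and nonnegativity of mutual informations -/

/-- Gibbs' inequality: relative entropy of a distribution with respect to a subdistribution is
nonnegative. -/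
theorem gibbs {ι : Type*} [Fintype ι] (a b : ι → ℝ) (ha : ∀ i, 0 ≤ a i) (hb : ∀ i, 0 ≤ b i)
    (hab : ∀ i, b i = 0 → a i = 0) (ha1 : ∑ i, a i = 1) (hb1 : ∑ i, b i ≤ 1) :
    0 ≤ ∑ i, a i * Real.log (a i / b i) := by
  have key : ∀ i, a i - b i ≤ a i * Real.log (a i / b i) := by
    intro i
    rcases (ha i).eq_or_lt with h | h
    · simpa [← h] using hb i
    · have hbi : 0 < b i := lt_of_le_of_ne (hb i) fun h0 => h.ne' (hab i h0.symm)
      have h1 := Real.log_le_sub_one_of_pos (div_pos hbi h)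
      rw [← inv_div, Real.log_inv]
      have h2 := mul_le_mul_of_nonneg_left h1 h.le
      have h3 : a i * (b i / a i - 1) = b i - a i := by field_simp
      linarith
  have := Finset.sum_le_sum fun i (_ : i ∈ Finset.univ) => key i
  rw [Finset.sum_sub_distrib] at this
  linarith

/-- Mutual information of a joint distribution of two variables is nonnegative. -/
theorem mi_nonneg {A B : Type*} [Fintype A] [Fintype B] (r : A → B → ℝ)
    (hr : ∀ a b, 0 ≤ r a b) (h1 : ∑ a, ∑ b, r a b = 1) :
    0 ≤ ∑ a, ∑ b, r a b * Real.log (r a b / ((∑ b', r a b') * ∑ a', r a' b)) := by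
  have h := gibbs (fun p : A × B => r p.1 p.2) (fun p => (∑ b', r p.1 b') * ∑ a', r a' p.2)
    (fun p => hr _ _)
    (fun p => mul_nonneg (Finset.sum_nonneg fun _ _ => hr _ _) (Finset.sum_nonneg fun _ _ => hr _ _))
    ?_ (by rw [Fintype.sum_prod_type]; exact h1) ?_
  · rw [Fintype.sum_prod_type] at h
    exact h
  · rintro ⟨a, b⟩ h
    rcases mul_eq_zero.1 h with h | h
    · exact (Finset.sum_eq_zero_iff_of_nonneg fun _ _ => hr _ _).1 h b (Finset.mem_univ _)
    · exact (Finset.sum_eq_zero_iff_of_nonneg fun _ _ => hr _ _).1 h a (Finset.mem_univ _)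
  · rw [Fintype.sum_prod_type]
    simp only
    rw [← Finset.sum_mul_sum, h1, Finset.sum_comm, h1, one_mul]

/-- Conditional mutual information of `A` and `B` given `C` is nonnegative. -/
theorem cmi_nonneg {A B C : Type*} [Fintype A] [Fintype B] [Fintype C] (r : A → B → C → ℝ)
    (hr : ∀ a b c, 0 ≤ r a b c) (h1 : ∑ a, ∑ b, ∑ c, r a b c = 1) :
    0 ≤ ∑ a, ∑ b, ∑ c, r a b c * Real.log (r a b c * (∑ a', ∑ b', r a' b' c) /
      ((∑ b', r a b' c) * ∑ a', r a' b c)) := by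
  have hz : ∀ a b c, (∑ b', r a b' c) = 0 → r a b c = 0 := fun a b c h =>
    (Finset.sum_eq_zero_iff_of_nonneg fun _ _ => hr _ _ _).1 h b (Finset.mem_univ _)
  have h := gibbs (fun p : A × B × C => r p.1 p.2.1 p.2.2)
    (fun p => (∑ b', r p.1 b' p.2.2) * (∑ a', r a' p.2.1 p.2.2) / ∑ a', ∑ b', r a' b' p.2.2)
    (fun p => hr _ _ _)
    (fun p => div_nonneg (mul_nonneg (Finset.sum_nonneg fun _ _ => hr _ _ _)
      (Finset.sum_nonneg fun _ _ => hr _ _ _))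
      (Finset.sum_nonneg fun _ _ => Finset.sum_nonneg fun _ _ => hr _ _ _))
    ?_ (by simp only [Fintype.sum_prod_type]; exact h1) ?_
  · simp only [Fintype.sum_prod_type, div_div_eq_mul_div] at h
    exact h
  · rintro ⟨a, b, c⟩ h
    rcases div_eq_zero_iff.1 h with h | h
    · rcases mul_eq_zero.1 h with h | h
      · exact hz a b c h
      · exact (Finset.sum_eq_zero_iff_of_nonneg fun _ _ => hr _ _ _).1 h a (Finset.mem_univ _)
    · exact hz a b c ((Finset.sum_eq_zero_iff_of_nonneg
        fun _ _ => Finset.sum_nonneg fun _ _ => hr _ _ _).1 h a (Finset.mem_univ _))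
  · simp only [Fintype.sum_prod_type]
    refine le_of_eq ?_
    have e : ∀ c, ∑ a, ∑ b, (∑ b', r a b' c) * (∑ a', r a' b c) / (∑ a', ∑ b', r a' b' c)
        = ∑ a', ∑ b', r a' b' c := by
      intro c
      simp only [← Finset.sum_div]
      rw [← Finset.sum_mul_sum, Finset.sum_comm (f := fun b a => r a b c)]
      -- also correct where the marginal of `c` vanishes, both sides being `0`
      exact mul_self_div_self _
    have sw : ∀ f : A → B → C → ℝ, ∑ a, ∑ b, ∑ c, f a b c = ∑ c, ∑ a, ∑ b, f a b c := by
      intro f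
      rw [Finset.sum_comm (s := (Finset.univ : Finset C))]
      exact Finset.sum_congr rfl fun a _ => Finset.sum_comm
    rw [sw, Finset.sum_congr rfl fun c _ => e c, ← sw, h1]

theorem IsDist.sum_eq {Q : 𝒳 × 𝒴 × 𝒵 → ℝ} (h : IsDist Q) :
    ∑ x, ∑ y, ∑ z, Q (x, y, z) = 1 := by
  simpa only [Fintype.sum_prod_type] using h.2

theorem miXY_Z_nonneg {Q : 𝒳 × 𝒴 × 𝒵 → ℝ} (h : IsDist Q) : 0 ≤ miXY_Z Q :=
  cmi_nonneg (fun x y z => Q (x, y, z)) (fun _ _ _ => h.1 _) h.sum_eq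

theorem miXZ_Y_nonneg {Q : 𝒳 × 𝒴 × 𝒵 → ℝ} (h : IsDist Q) : 0 ≤ miXZ_Y Q := by
  have := cmi_nonneg (fun x z y => Q (x, y, z)) (fun _ _ _ => h.1 _)
    (by rw [← h.sum_eq]; exact Finset.sum_congr rfl fun _ _ => Finset.sum_comm)
  refine this.trans_eq ?_
  unfold miXZ_Y
  exact Finset.sum_congr rfl fun _ _ => Finset.sum_comm

theorem miXYZ_nonneg {Q : 𝒳 × 𝒴 × 𝒵 → ℝ} (h : IsDist Q) : 0 ≤ miXYZ Q := by
  have := mi_nonneg (fun x (p : 𝒴 × 𝒵) => Q (x, p)) (fun _ _ => h.1 _)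
    (by simpa only [Fintype.sum_prod_type] using h.2)
  simp only [Fintype.sum_prod_type] at this
  exact this

theorem miYZ_nonneg {Q : 𝒳 × 𝒴 × 𝒵 → ℝ} (h : IsDist Q) : 0 ≤ miYZ Q := by
  have hY : ∀ y, ∑ z, margYZ Q y z = margY Q y := fun y => Finset.sum_comm
  have hZ : ∀ z, ∑ y, margYZ Q y z = margZ Q z := fun z => Finset.sum_comm
  have := mi_nonneg (margYZ Q) (fun _ _ => Finset.sum_nonneg fun _ _ => h.1 _) (by
    simp only [hY]
    rw [← h.sum_eq]
    exact Finset.sum_comm)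
  simp only [hY, hZ] at this
  exact this

/-! ### The conditionally independent coupling -/

/-- If `Y` and `Z` are independent given `X`, the co-information equals `MI(Y:Z)`. -/
theorem coI_eq_miYZ {Q : 𝒳 × 𝒴 × 𝒵 → ℝ} (h : IsDist Q)
    (hi : ∀ x y z, Q (x, y, z) * margX Q x = margXY Q x y * margXZ Q x z) :
    coI Q = miYZ Q := by
  have e1 : miXY Q = ∑ x, ∑ y, ∑ z, Q (x, y, z) *
      Real.log (margXY Q x y / (margX Q x * margY Q y)) := by
    simp only [miXY, ← Finset.sum_mul]
    rfl
  have e2 : miYZ Q = ∑ x, ∑ y, ∑ z, Q (x, y, z) *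
      Real.log (margYZ Q y z / (margY Q y * margZ Q z)) := by
    rw [Finset.sum_comm]
    refine Finset.sum_congr rfl fun y _ => ?_
    rw [Finset.sum_comm]
    refine Finset.sum_congr rfl fun z _ => ?_
    rw [← Finset.sum_mul]
    rfl
  rw [coI, e1, e2, miXY_Z]
  simp only [← Finset.sum_sub_distrib]
  refine Finset.sum_congr rfl fun x _ => Finset.sum_congr rfl fun y _ =>
    Finset.sum_congr rfl fun z _ => ?_
  rcases (h.1 (x, y, z)).eq_or_lt with h0 | h0
  · simp [← h0]
  have hxy : 0 < margXY Q x y := h0.trans_le <|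
    Finset.single_le_sum (f := fun z => Q (x, y, z)) (fun _ _ => h.1 _) (Finset.mem_univ z)
  have hxz : 0 < margXZ Q x z := h0.trans_le <|
    Finset.single_le_sum (f := fun y => Q (x, y, z)) (fun _ _ => h.1 _) (Finset.mem_univ y)
  have hyz : 0 < margYZ Q y z := h0.trans_le <|
    Finset.single_le_sum (f := fun x => Q (x, y, z)) (fun _ _ => h.1 _) (Finset.mem_univ x)
  have hx : 0 < margX Q x := hxy.trans_le <| Finset.single_le_sum (f := fun y => margXY Q x y)
    (fun _ _ => Finset.sum_nonneg fun _ _ => h.1 _) (Finset.mem_univ y)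
  have hy : 0 < margY Q y := hxy.trans_le <| Finset.single_le_sum (f := fun x => margXY Q x y)
    (fun _ _ => Finset.sum_nonneg fun _ _ => h.1 _) (Finset.mem_univ x)
  have hz : 0 < margZ Q z := hxz.trans_le <| Finset.single_le_sum (f := fun x => margXZ Q x z)
    (fun _ _ => Finset.sum_nonneg fun _ _ => h.1 _) (Finset.mem_univ x)
  rw [← mul_sub, ← Real.log_div (by positivity) (by positivity)]
  congr 2
  have := hi x y z
  field_simp
  linear_combination -this

/-- The distribution with the `(X,Y)`- and `(X,Z)`-marginals of `P` under which `Y` and `Z` are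
independent given `X`. Where `X` has mass zero the division by zero gives the value `0`. -/
noncomputable def condIndep (P : 𝒳 × 𝒴 × 𝒵 → ℝ) (p : 𝒳 × 𝒴 × 𝒵) : ℝ :=
  margXY P p.1 p.2.1 * margXZ P p.1 p.2.2 / margX P p.1

section condIndep

variable {P : 𝒳 × 𝒴 × 𝒵 → ℝ}

omit [Fintype 𝒳] in
theorem sum_margXZ (P : 𝒳 × 𝒴 × 𝒵 → ℝ) (x : 𝒳) : ∑ z, margXZ P x z = margX P x :=
  Finset.sum_comm

theorem margXY_eq_zero (hP : IsDist P) {x : 𝒳} (h : margX P x = 0) (y : 𝒴) :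
    margXY P x y = 0 :=
  (Finset.sum_eq_zero_iff_of_nonneg fun _ _ => Finset.sum_nonneg fun _ _ => hP.1 _).1 h y
    (Finset.mem_univ _)

theorem margXZ_eq_zero (hP : IsDist P) {x : 𝒳} (h : margX P x = 0) (z : 𝒵) :
    margXZ P x z = 0 :=
  (Finset.sum_eq_zero_iff_of_nonneg fun _ _ => Finset.sum_nonneg fun _ _ => hP.1 _).1
    ((sum_margXZ P x).trans h) z (Finset.mem_univ _)

theorem margXY_condIndep (hP : IsDist P) (x : 𝒳) (y : 𝒴) :
    margXY (condIndep P) x y = margXY P x y := by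
  change ∑ z, margXY P x y * margXZ P x z / margX P x = _
  rw [← Finset.sum_div, ← Finset.mul_sum, sum_margXZ]
  exact mul_div_cancel_of_imp fun h => margXY_eq_zero hP h y

theorem margXZ_condIndep (hP : IsDist P) (x : 𝒳) (z : 𝒵) :
    margXZ (condIndep P) x z = margXZ P x z := by
  change ∑ y, margXY P x y * margXZ P x z / margX P x = _
  rw [← Finset.sum_div, ← Finset.sum_mul]
  exact mul_div_cancel_left_of_imp fun h => margXZ_eq_zero hP h z

theorem margX_condIndep (hP : IsDist P) (x : 𝒳) : margX (condIndep P) x = margX P x :=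
  Finset.sum_congr rfl fun y _ => margXY_condIndep hP x y

theorem condIndep_mem (hP : IsDist P) : condIndep P ∈ ΔP P := by
  refine ⟨⟨fun p => ?_, ?_⟩, margXY_condIndep hP, margXZ_condIndep hP⟩
  · exact div_nonneg (mul_nonneg (Finset.sum_nonneg fun _ _ => hP.1 _)
      (Finset.sum_nonneg fun _ _ => hP.1 _))
      (Finset.sum_nonneg fun _ _ => Finset.sum_nonneg fun _ _ => hP.1 _)
  · rw [← hP.sum_eq]
    simp only [Fintype.sum_prod_type]
    exact Finset.sum_congr rfl fun x _ => margX_condIndep hP x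

theorem coI_condIndep_nonneg (hP : IsDist P) : 0 ≤ coI (condIndep P) := by
  have hd := (condIndep_mem hP).1
  rw [coI_eq_miYZ hd]
  · exact miYZ_nonneg hd
  · intro x y z
    rw [margX_condIndep hP, margXY_condIndep hP, margXZ_condIndep hP]
    exact div_mul_cancel_of_imp fun h => by simp [margXY_eq_zero hP h]

end condIndep

/-- nonnegativity of `ŨI(X:Y∖Z)`, `ŨI(X:Z∖Y)`, `S̃I(X:Y;Z)` and `C̃I(X:Y;Z)`. -/
theorem stmt2 [Nonempty 𝒳] [Nonempty 𝒴] [Nonempty 𝒵]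
    (P : 𝒳 × 𝒴 × 𝒵 → ℝ) (hP : IsDist P) :
    0 ≤ UIY P ∧ 0 ≤ UIZ P ∧ 0 ≤ SI P ∧ 0 ≤ CI P := by
  refine ⟨?_, ?_, ?_, ?_⟩
  · refine Real.sInf_nonneg ?_
    rintro _ ⟨Q, hQ, rfl⟩
    exact miXY_Z_nonneg hQ.1
  · refine Real.sInf_nonneg ?_
    rintro _ ⟨Q, hQ, rfl⟩
    exact miXZ_Y_nonneg hQ.1
  · exact Real.sSup_nonneg' ⟨_, ⟨_, condIndep_mem hP, rfl⟩, coI_condIndep_nonneg hP⟩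
  · refine sub_nonneg.2 (csInf_le ⟨0, ?_⟩ ⟨P, ⟨hP, fun _ _ => rfl, fun _ _ => rfl⟩, rfl⟩)
    rintro _ ⟨Q, hQ, rfl⟩
    exact miXYZ_nonneg hQ.1

end PID
end

section
/- Let UI₁, UI₂, SI, CI be continuous nonnegative real-valued functions on the set Δ of joint distributions of (X,Y,Z) such that for every P ∈ Δ: MI_P(X:(Y,Z)) = SI(P) + UI₁(P) + UI₂(P) + CI(P), MI_P(X:Y) = SI(P) + UI₁(P), MI_P(X:Z) = SI(P) + UI₂(P), and such that UI₁, UI₂ depend only on the pair marginals of P on (X,Y) and (X,Z) (i.e. they are constant on each set Δ_P). Then for every P ∈ Δ: UI₁(P) ≤ ŨI(X:Y∖Z), UI₂(P) ≤ ŨI(X:Z∖Y), SI(P) ≥ S̃I(X:Y;Z) and CI(P) ≥ C̃I(X:Y;Z). Moreover, if there exists Q ∈ Δ_P with CI(Q) = 0, then all four inequalities hold with equality at P; and conversely, if one of the inequalities holds with equality at P, then there exists Q ∈ Δ_P with CI(Q) = 0. -/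
/-!
The three decomposition identities and the chain rule
`MI(X:(Y,Z)) = MI(X:Z) + MI(X:Y|Z) = MI(X:Y) + MI(X:Z|Y)` show that on `Δ_P`, where `MI(X:Y)`,
`MI(X:Z)`, `UI₁`, `UI₂` and hence also `SI'` are constant, each of `MI(X:Y|Z)`, `MI(X:Z|Y)`,
`MI(X:(Y,Z))` and `-CoI` equals `CI'` up to an additive constant:
`MI_Q(X:Y|Z) = UI₁(P) + CI'(Q)`, `MI_Q(X:Z|Y) = UI₂(P) + CI'(Q)`, `CoI_Q = SI'(P) - CI'(Q)`.
Since `Δ_P` is compact and `CI'` is continuous, `CI'` has a minimizer `Q₀` on `Δ_P`, which thus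
solves all four optimization problems simultaneously. Each of the four inequalities has gap exactly
`CI'(Q₀) ≥ 0`, so equality in any one of them means that the minimum of `CI'` on `Δ_P` is zero.
The continuity of mutual information itself plays no role.
-/

open scoped BigOperators
open Real

namespace PID

variable {𝒳 𝒴 𝒵 : Type*} [Fintype 𝒳] [Fintype 𝒴] [Fintype 𝒵]

/-! ### Chain rule -/

/-- The pointwise chain rule. The hypotheses make every factor nonzero when `p ≠ 0`; for `p = 0`
both sides vanish. Here `p, a, b, c, d` stand for `p(x,y,z), p(x), p(z), p(x,z), p(y,z)`. -/
lemma mul_log_chain {p a b c d : ℝ} (hp : 0 ≤ p) (ha : p ≤ a) (hb : p ≤ b) (hc : p ≤ c)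
    (hd : p ≤ d) :
    p * log (p / (a * d)) = p * log (c / (a * b)) + p * log (p * b / (c * d)) := by
  rcases hp.eq_or_lt with rfl | hp
  · simp
  have ha' : a ≠ 0 := (hp.trans_le ha).ne'
  have hb' : b ≠ 0 := (hp.trans_le hb).ne'
  have hc' : c ≠ 0 := (hp.trans_le hc).ne'
  have hd' : d ≠ 0 := (hp.trans_le hd).ne'
  rw [← mul_add, ← log_mul (by positivity) (by positivity)]
  congr 2
  field_simp

lemma IsDist.le_margXY {P : 𝒳 × 𝒴 × 𝒵 → ℝ} (hP : IsDist P) (x : 𝒳) (y : 𝒴) (z : 𝒵) :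
    P (x, y, z) ≤ margXY P x y :=
  Finset.single_le_sum (f := fun z => P (x, y, z)) (fun _ _ => hP.1 _) (Finset.mem_univ z)

lemma IsDist.le_margXZ {P : 𝒳 × 𝒴 × 𝒵 → ℝ} (hP : IsDist P) (x : 𝒳) (y : 𝒴) (z : 𝒵) :
    P (x, y, z) ≤ margXZ P x z :=
  Finset.single_le_sum (f := fun y => P (x, y, z)) (fun _ _ => hP.1 _) (Finset.mem_univ y)

lemma IsDist.le_margYZ {P : 𝒳 × 𝒴 × 𝒵 → ℝ} (hP : IsDist P) (x : 𝒳) (y : 𝒴) (z : 𝒵) :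
    P (x, y, z) ≤ margYZ P y z :=
  Finset.single_le_sum (f := fun x => P (x, y, z)) (fun _ _ => hP.1 _) (Finset.mem_univ x)

lemma IsDist.le_margX {P : 𝒳 × 𝒴 × 𝒵 → ℝ} (hP : IsDist P) (x : 𝒳) (y : 𝒴) (z : 𝒵) :
    P (x, y, z) ≤ margX P x :=
  (hP.le_margXY x y z).trans <| Finset.single_le_sum (f := fun y => margXY P x y)
    (fun _ _ => Finset.sum_nonneg fun _ _ => hP.1 _) (Finset.mem_univ y)

lemma IsDist.le_margY {P : 𝒳 × 𝒴 × 𝒵 → ℝ} (hP : IsDist P) (x : 𝒳) (y : 𝒴) (z : 𝒵) :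
    P (x, y, z) ≤ margY P y :=
  (hP.le_margXY x y z).trans <| Finset.single_le_sum (f := fun x => margXY P x y)
    (fun _ _ => Finset.sum_nonneg fun _ _ => hP.1 _) (Finset.mem_univ x)

lemma IsDist.le_margZ {P : 𝒳 × 𝒴 × 𝒵 → ℝ} (hP : IsDist P) (x : 𝒳) (y : 𝒴) (z : 𝒵) :
    P (x, y, z) ≤ margZ P z :=
  (hP.le_margXZ x y z).trans <| Finset.single_le_sum (f := fun x => margXZ P x z)
    (fun _ _ => Finset.sum_nonneg fun _ _ => hP.1 _) (Finset.mem_univ x)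

lemma miXYZ_eq_miXZ_add {P : 𝒳 × 𝒴 × 𝒵 → ℝ} (hP : IsDist P) :
    miXYZ P = miXZ P + miXY_Z P := by
  have h : miXZ P = ∑ x, ∑ y, ∑ z,
      P (x, y, z) * log (margXZ P x z / (margX P x * margZ P z)) := by
    refine Finset.sum_congr rfl fun x _ => ?_
    rw [Finset.sum_comm]
    exact Finset.sum_congr rfl fun z _ => Finset.sum_mul ..
  rw [h, miXYZ, miXY_Z]
  simp only [← Finset.sum_add_distrib]
  refine Finset.sum_congr rfl fun x _ => Finset.sum_congr rfl fun y _ =>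
    Finset.sum_congr rfl fun z _ => ?_
  exact mul_log_chain (hP.1 _) (hP.le_margX x y z) (hP.le_margZ x y z) (hP.le_margXZ x y z)
    (hP.le_margYZ x y z)

lemma miXYZ_eq_miXY_add {P : 𝒳 × 𝒴 × 𝒵 → ℝ} (hP : IsDist P) :
    miXYZ P = miXY P + miXZ_Y P := by
  have h : miXY P = ∑ x, ∑ y, ∑ z,
      P (x, y, z) * log (margXY P x y / (margX P x * margY P y)) :=
    Finset.sum_congr rfl fun x _ => Finset.sum_congr rfl fun y _ => Finset.sum_mul ..
  rw [h, miXYZ, miXZ_Y]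
  simp only [← Finset.sum_add_distrib]
  refine Finset.sum_congr rfl fun x _ => Finset.sum_congr rfl fun y _ =>
    Finset.sum_congr rfl fun z _ => ?_
  exact mul_log_chain (hP.1 _) (hP.le_margX x y z) (hP.le_margY x y z) (hP.le_margXY x y z)
    (hP.le_margYZ x y z)

/-! ### The set of distributions with prescribed pair marginals -/

lemma miXY_eq_of_mem {P Q : 𝒳 × 𝒴 × 𝒵 → ℝ} (hQ : Q ∈ ΔP P) : miXY Q = miXY P := by
  have hX : ∀ x, margX Q x = margX P x := fun x =>
    Finset.sum_congr rfl fun y _ => hQ.2.1 x y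
  have hY : ∀ y, margY Q y = margY P y := fun y =>
    Finset.sum_congr rfl fun x _ => hQ.2.1 x y
  simp only [miXY, hX, hY, hQ.2.1]

lemma miXZ_eq_of_mem {P Q : 𝒳 × 𝒴 × 𝒵 → ℝ} (hQ : Q ∈ ΔP P) : miXZ Q = miXZ P := by
  have hX : ∀ x, margX Q x = margX P x := fun x =>
    Finset.sum_congr rfl fun y _ => hQ.2.1 x y
  have hZ : ∀ z, margZ Q z = margZ P z := fun z =>
    Finset.sum_congr rfl fun x _ => hQ.2.2 x z
  simp only [miXZ, hX, hZ, hQ.2.2]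

lemma isCompact_ΔP (P : 𝒳 × 𝒴 × 𝒵 → ℝ) : IsCompact (ΔP P) := by
  refine (isCompact_Icc (a := (0 : 𝒳 × 𝒴 × 𝒵 → ℝ)) (b := 1)).of_isClosed_subset ?_ ?_
  · simp only [ΔP, IsDist, margXY, margXZ, Set.ofPred_and, Set.ofPred_forall]
    refine .inter (.inter ?_ ?_) (.inter ?_ ?_)
    · exact isClosed_iInter fun p => isClosed_le continuous_const (continuous_apply p)
    · exact isClosed_eq (by fun_prop) continuous_const
    · exact isClosed_iInter fun x => isClosed_iInter fun y =>
        isClosed_eq (by fun_prop) continuous_const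
    · exact isClosed_iInter fun x => isClosed_iInter fun z =>
        isClosed_eq (by fun_prop) continuous_const
  · intro Q hQ
    refine ⟨hQ.1.1, fun p => ?_⟩
    rw [Pi.one_apply, ← hQ.1.2]
    exact Finset.single_le_sum (fun p _ => hQ.1.1 p) (Finset.mem_univ p)

/-- If `f` and `g` differ by a constant on `s` and `a` minimizes `g` on `s`, then `a` also
minimizes `f` on `s`. -/
lemma sInf_image_of_eq_add {α : Type*} {s : Set α} {f g : α → ℝ} {c : ℝ} {a : α} (ha : a ∈ s)
    (hmin : ∀ b ∈ s, g a ≤ g b) (hf : ∀ b ∈ s, f b = c + g b) : sInf (f '' s) = c + g a := by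
  refine IsLeast.csInf_eq ⟨⟨a, ha, hf a ha⟩, ?_⟩
  rintro _ ⟨b, hb, rfl⟩
  rw [hf b hb]
  linarith [hmin b hb]

/-! ### Comparison of the decompositions -/

/-- `ŨI`, `S̃I`, `C̃I` bound any bivariate information decomposition whose
unique informations depend only on the pair marginals; with equality iff some
distribution in `Δ_P` has vanishing synergy. -/
theorem stmt3 [Nonempty 𝒳] [Nonempty 𝒴] [Nonempty 𝒵]
    (UI₁ UI₂ SI' CI' : (𝒳 × 𝒴 × 𝒵 → ℝ) → ℝ)
    (hcont : ContinuousOn UI₁ {P | IsDist P} ∧ ContinuousOn UI₂ {P | IsDist P} ∧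
      ContinuousOn SI' {P | IsDist P} ∧ ContinuousOn CI' {P | IsDist P})
    (hnonneg : ∀ P, IsDist P → 0 ≤ UI₁ P ∧ 0 ≤ UI₂ P ∧ 0 ≤ SI' P ∧ 0 ≤ CI' P)
    (hdecomp : ∀ P, IsDist P →
      miXYZ P = SI' P + UI₁ P + UI₂ P + CI' P ∧
      miXY P = SI' P + UI₁ P ∧ miXZ P = SI' P + UI₂ P)
    (hmarg : ∀ P, IsDist P → ∀ Q ∈ ΔP P, UI₁ Q = UI₁ P ∧ UI₂ Q = UI₂ P) :
    ∀ P, IsDist P →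
      (UI₁ P ≤ UIY P ∧ UI₂ P ≤ UIZ P ∧ SI P ≤ SI' P ∧ CI P ≤ CI' P) ∧
      ((∃ Q ∈ ΔP P, CI' Q = 0) →
        UI₁ P = UIY P ∧ UI₂ P = UIZ P ∧ SI' P = SI P ∧ CI' P = CI P) ∧
      ((UI₁ P = UIY P ∨ UI₂ P = UIZ P ∨ SI' P = SI P ∨ CI' P = CI P) →
        ∃ Q ∈ ΔP P, CI' Q = 0) := by
  intro P hP
  have hPP : P ∈ ΔP P := ⟨hP, fun _ _ => rfl, fun _ _ => rfl⟩
  obtain ⟨Q₀, hQ₀, hmin⟩ := (isCompact_ΔP P).exists_isMinOn ⟨P, hPP⟩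
    (hcont.2.2.2.mono fun Q hQ => hQ.1)
  replace hmin : ∀ Q ∈ ΔP P, CI' Q₀ ≤ CI' Q := fun Q hQ => hmin hQ
  obtain ⟨-, hXY, hXZ⟩ := hdecomp P hP
  have key : ∀ Q ∈ ΔP P, miXY_Z Q = UI₁ P + CI' Q ∧ miXZ_Y Q = UI₂ P + CI' Q ∧
      coI Q = SI' P - CI' Q ∧ miXYZ Q = (SI' P + UI₁ P + UI₂ P) + CI' Q := by
    intro Q hQ
    obtain ⟨h1, h2, h3⟩ := hdecomp Q hQ.1
    obtain ⟨h4, h5⟩ := hmarg P hP Q hQ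
    have h6 := miXYZ_eq_miXZ_add hQ.1
    have h7 := miXYZ_eq_miXY_add hQ.1
    have h8 := miXY_eq_of_mem hQ
    have h9 := miXZ_eq_of_mem hQ
    unfold coI
    refine ⟨?_, ?_, ?_, ?_⟩ <;> linarith
  have hUIY : UIY P = UI₁ P + CI' Q₀ :=
    sInf_image_of_eq_add hQ₀ hmin fun Q hQ => (key Q hQ).1
  have hUIZ : UIZ P = UI₂ P + CI' Q₀ :=
    sInf_image_of_eq_add hQ₀ hmin fun Q hQ => (key Q hQ).2.1
  have hSI : SI P = SI' P - CI' Q₀ := by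
    refine IsGreatest.csSup_eq ⟨⟨Q₀, hQ₀, (key Q₀ hQ₀).2.2.1⟩, ?_⟩
    rintro _ ⟨Q, hQ, rfl⟩
    rw [(key Q hQ).2.2.1]
    linarith [hmin Q hQ]
  have hCI : CI P = CI' P - CI' Q₀ := by
    have h : sInf (miXYZ '' ΔP P) = (SI' P + UI₁ P + UI₂ P) + CI' Q₀ :=
      sInf_image_of_eq_add hQ₀ hmin fun Q hQ => (key Q hQ).2.2.2
    rw [CI, h, (key P hPP).2.2.2]
    ring
  have h0 : 0 ≤ CI' Q₀ := (hnonneg Q₀ hQ₀.1).2.2.2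
  rw [hUIY, hUIZ, hSI, hCI]
  refine ⟨⟨?_, ?_, ?_, ?_⟩, ?_, ?_⟩
  · linarith
  · linarith
  · linarith
  · linarith
  · rintro ⟨Q, hQ, hQ0⟩
    have := hmin Q hQ
    refine ⟨?_, ?_, ?_, ?_⟩ <;> linarith
  · intro h
    refine ⟨Q₀, hQ₀, ?_⟩
    rcases h with h | h | h | h <;> linarith

end PID
end

section
/- Let P be a joint distribution on 𝒳 × 𝒴 × 𝒴 (so 𝒵 = 𝒴) such that the pair marginals of (X,Y) and (X,Z) are identical, i.e. Σ_z P(x,y,z) = Σ_{y'} P(x,y',y) for all x ∈ 𝒳, y ∈ 𝒴. Then ŨI(X:Y∖Z) = ŨI(X:Z∖Y) = 0, S̃I(X:Y;Z) = MI_P(X:Y) = MI_P(X:Z), and C̃I(X:Y;Z) = MI_P(X:Y|Z) = MI_P(X:Z|Y). -/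
/-!
The diagonal coupling `Q(x,y,z) = P(x,y) 1_{y = z}` lies in `Δ_P` because the two pair marginals
agree, and `MI_Q(X:Y|Z) = 0` since `Y = Z` holds `Q`-almost surely. As conditional mutual
information is nonnegative (`miXY_Z_nonneg`, from `log t ≥ 1 - 1/t`), the minimum of `MI(X:Y|Z)`
over `Δ_P` is `0`.

All other quantities reduce to this one. `MI(X:Y)` and `MI(X:Z)` depend only on the pair marginals,
so they are constant on `Δ_P`, and here they are equal. The two chain rules
`MI(X:(Y,Z)) = MI(X:Y) + MI(X:Z|Y) = MI(X:Z) + MI(X:Y|Z)` then show that on `Δ_P` both conditional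
mutual informations coincide, that `CoI_Q = MI_P(X:Y) - MI_Q(X:Y|Z)`, and that
`MI_Q(X:(Y,Z)) = MI_P(X:Y) + MI_Q(X:Y|Z)`.
-/

open scoped BigOperators
open Real

namespace PID

variable {𝒳 𝒴 𝒵 : Type*} [Fintype 𝒳] [Fintype 𝒴] [Fintype 𝒵]

/-- Wherever `Q` is positive, so are all its marginals; the arguments of the logarithms below are
therefore positive on the support of `Q`. -/
lemma marg_pos {Q : 𝒳 × 𝒴 × 𝒵 → ℝ} (h0 : ∀ p, 0 ≤ Q p) {x : 𝒳} {y : 𝒴} {z : 𝒵}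
    (h : 0 < Q (x, y, z)) :
    0 < margX Q x ∧ 0 < margY Q y ∧ 0 < margZ Q z ∧
      0 < margXY Q x y ∧ 0 < margXZ Q x z ∧ 0 < margYZ Q y z := by
  have hXY : 0 < margXY Q x y :=
    h.trans_le (Finset.single_le_sum (f := fun z => Q (x, y, z)) (fun _ _ => h0 _)
      (Finset.mem_univ z))
  have hXZ : 0 < margXZ Q x z :=
    h.trans_le (Finset.single_le_sum (f := fun y => Q (x, y, z)) (fun _ _ => h0 _)
      (Finset.mem_univ y))
  have hYZ : 0 < margYZ Q y z :=
    h.trans_le (Finset.single_le_sum (f := fun x => Q (x, y, z)) (fun _ _ => h0 _)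
      (Finset.mem_univ x))
  refine ⟨?_, ?_, ?_, hXY, hXZ, hYZ⟩
  · exact hXY.trans_le (Finset.single_le_sum (f := fun y => margXY Q x y)
      (fun _ _ => Finset.sum_nonneg fun _ _ => h0 _) (Finset.mem_univ y))
  · exact hXY.trans_le (Finset.single_le_sum (f := fun x => margXY Q x y)
      (fun _ _ => Finset.sum_nonneg fun _ _ => h0 _) (Finset.mem_univ x))
  · exact hXZ.trans_le (Finset.single_le_sum (f := fun x => margXZ Q x z)
      (fun _ _ => Finset.sum_nonneg fun _ _ => h0 _) (Finset.mem_univ x))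

lemma miXYZ_eq_miXY_add_s6 {Q : 𝒳 × 𝒴 × 𝒵 → ℝ} (h0 : ∀ p, 0 ≤ Q p) :
    miXYZ Q = miXY Q + miXZ_Y Q := by
  unfold miXYZ miXY miXZ_Y
  rw [← Finset.sum_add_distrib]
  refine Finset.sum_congr rfl fun x _ => ?_
  rw [← Finset.sum_add_distrib]
  refine Finset.sum_congr rfl fun y _ => ?_
  conv_rhs => rw [margXY, Finset.sum_mul]
  rw [← Finset.sum_add_distrib]
  refine Finset.sum_congr rfl fun z _ => ?_
  change _ = Q (x, y, z) * Real.log (margXY Q x y / (margX Q x * margY Q y)) +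
    Q (x, y, z) * Real.log (Q (x, y, z) * margY Q y / (margXY Q x y * margYZ Q y z))
  rcases (h0 (x, y, z)).eq_or_lt with h | h
  · simp [← h]
  · obtain ⟨hX, hY, -, hXY, -, hYZ⟩ := marg_pos h0 h
    rw [← mul_add, ← Real.log_mul (by positivity) (by positivity)]
    congr 2
    field_simp

lemma miXYZ_eq_miXZ_add_s6 {Q : 𝒳 × 𝒴 × 𝒵 → ℝ} (h0 : ∀ p, 0 ≤ Q p) :
    miXYZ Q = miXZ Q + miXY_Z Q := by
  unfold miXYZ miXZ miXY_Z
  rw [← Finset.sum_add_distrib]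
  refine Finset.sum_congr rfl fun x _ => ?_
  rw [Finset.sum_comm, Finset.sum_comm (s := (Finset.univ : Finset 𝒴)), ← Finset.sum_add_distrib]
  refine Finset.sum_congr rfl fun z _ => ?_
  conv_rhs => rw [margXZ, Finset.sum_mul]
  rw [← Finset.sum_add_distrib]
  refine Finset.sum_congr rfl fun y _ => ?_
  change _ = Q (x, y, z) * Real.log (margXZ Q x z / (margX Q x * margZ Q z)) +
    Q (x, y, z) * Real.log (Q (x, y, z) * margZ Q z / (margXZ Q x z * margYZ Q y z))
  rcases (h0 (x, y, z)).eq_or_lt with h | h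
  · simp [← h]
  · obtain ⟨hX, -, hZ, -, hXZ, hYZ⟩ := marg_pos h0 h
    rw [← mul_add, ← Real.log_mul (by positivity) (by positivity)]
    congr 2
    field_simp

/-- Nonnegativity of conditional mutual information: termwise `log t ≥ 1 - 1/t` bounds the sum below
by the total mass of `Q` minus that of the measure `Q(x,z) Q(y,z) / Q(z)`, and the two masses are
equal. -/
lemma miXY_Z_nonneg_s6 {Q : 𝒳 × 𝒴 × 𝒵 → ℝ} (h0 : ∀ p, 0 ≤ Q p) : 0 ≤ miXY_Z Q := by
  have hterm : ∀ x y z, Q (x, y, z) - margXZ Q x z * margYZ Q y z / margZ Q z ≤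
      Q (x, y, z) * Real.log (Q (x, y, z) * margZ Q z / (margXZ Q x z * margYZ Q y z)) := by
    intro x y z
    rcases (h0 (x, y, z)).eq_or_lt with h | h
    · have hXZ : 0 ≤ margXZ Q x z := Finset.sum_nonneg fun _ _ => h0 _
      have hYZ : 0 ≤ margYZ Q y z := Finset.sum_nonneg fun _ _ => h0 _
      have hZ : 0 ≤ margZ Q z := Finset.sum_nonneg fun _ _ => Finset.sum_nonneg fun _ _ => h0 _
      rw [← h, zero_mul, zero_sub, neg_nonpos]
      positivity
    · obtain ⟨-, -, hZ, -, hXZ, hYZ⟩ := marg_pos h0 h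
      have hlog := Real.one_sub_inv_le_log_of_pos
        (show 0 < Q (x, y, z) * margZ Q z / (margXZ Q x z * margYZ Q y z) by positivity)
      refine le_trans (le_of_eq ?_) (mul_le_mul_of_nonneg_left hlog h.le)
      field_simp
  have hmass : ∑ x, ∑ y, ∑ z, margXZ Q x z * margYZ Q y z / margZ Q z =
      ∑ x, ∑ y, ∑ z, Q (x, y, z) := by
    have hYZ : ∀ z, ∑ y, margYZ Q y z = margZ Q z := fun z => Finset.sum_comm
    have hL : ∀ x, ∑ y, ∑ z, margXZ Q x z * margYZ Q y z / margZ Q z =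
        ∑ z, margXZ Q x z * margZ Q z / margZ Q z := fun x => by
      rw [Finset.sum_comm]
      exact Finset.sum_congr rfl fun z _ => by
        rw [← Finset.sum_div, ← Finset.mul_sum, hYZ]
    have hR : ∀ x, ∑ y, ∑ z, Q (x, y, z) = ∑ z, margXZ Q x z := fun x => Finset.sum_comm
    simp_rw [hL, hR]
    rw [Finset.sum_comm, Finset.sum_comm (f := fun x z => margXZ Q x z)]
    refine Finset.sum_congr rfl fun z _ => ?_
    rw [← Finset.sum_div, ← Finset.sum_mul]
    exact mul_self_div_self (margZ Q z)
  calc (0 : ℝ) = ∑ x, ∑ y, ∑ z,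
        (Q (x, y, z) - margXZ Q x z * margYZ Q y z / margZ Q z) := by
        simp_rw [Finset.sum_sub_distrib]
        rw [hmass, sub_self]
    _ ≤ miXY_Z Q := Finset.sum_le_sum fun x _ => Finset.sum_le_sum fun y _ =>
        Finset.sum_le_sum fun z _ => hterm x y z

lemma miXY_congr {Q P : 𝒳 × 𝒴 × 𝒵 → ℝ} (h : ∀ x y, margXY Q x y = margXY P x y) :
    miXY Q = miXY P := by
  have hX : ∀ x, margX Q x = margX P x := fun x => Finset.sum_congr rfl fun y _ => h x y
  have hY : ∀ y, margY Q y = margY P y := fun y => Finset.sum_congr rfl fun x _ => h x y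
  simp only [miXY, h, hX, hY]

lemma miXY_eq_miXZ {P : 𝒳 × 𝒴 × 𝒴 → ℝ} (h : ∀ x y, margXY P x y = margXZ P x y) :
    miXY P = miXZ P := by
  have hY : ∀ y, margY P y = margZ P y := fun y => Finset.sum_congr rfl fun x _ => h x y
  simp only [miXY, miXZ, h, hY]

open Classical in
/-- The diagonal coupling: `(X,Y)` is distributed as under `P`, and `Z = Y`. -/
noncomputable def diag (P : 𝒳 × 𝒴 × 𝒴 → ℝ) : 𝒳 × 𝒴 × 𝒴 → ℝ :=
  fun p => if p.2.1 = p.2.2 then margXY P p.1 p.2.1 else 0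

lemma margXY_diag (P : 𝒳 × 𝒴 × 𝒴 → ℝ) (x : 𝒳) (y : 𝒴) :
    margXY (diag P) x y = margXY P x y := by
  rw [margXY]
  classical simp [diag]

lemma margXZ_diag (P : 𝒳 × 𝒴 × 𝒴 → ℝ) (x : 𝒳) (z : 𝒴) :
    margXZ (diag P) x z = margXY P x z := by
  rw [margXZ]
  classical simp [diag]

lemma diag_mem {P : 𝒳 × 𝒴 × 𝒴 → ℝ} (hP : IsDist P)
    (hmarg : ∀ x y, margXY P x y = margXZ P x y) : diag P ∈ ΔP P := by
  refine ⟨⟨fun p => ?_, ?_⟩, margXY_diag P, fun x z => (margXZ_diag P x z).trans (hmarg x z)⟩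
  · unfold diag
    split_ifs
    · exact Finset.sum_nonneg fun _ _ => hP.1 _
    · exact le_rfl
  · rw [← hP.2]
    simp only [Fintype.sum_prod_type]
    exact Finset.sum_congr rfl fun x _ => Finset.sum_congr rfl fun y _ => margXY_diag P x y

lemma miXY_Z_diag (P : 𝒳 × 𝒴 × 𝒴 → ℝ) : miXY_Z (diag P) = 0 := by
  refine Finset.sum_eq_zero fun x _ => Finset.sum_eq_zero fun y _ =>
    Finset.sum_eq_zero fun z _ => ?_
  by_cases hyz : y = z
  · subst hyz
    have hQ : ∀ x, diag P (x, y, y) = margXY P x y := fun x => by simp [diag]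
    have hZ : margZ (diag P) y = ∑ x, margXY P x y :=
      Finset.sum_congr rfl fun x _ => margXZ_diag P x y
    have hYZ : margYZ (diag P) y y = ∑ x, margXY P x y :=
      Finset.sum_congr rfl fun x _ => hQ x
    rw [hQ, hZ, margXZ_diag, hYZ]
    -- The quotient `a / a` is `1` or, if `a = 0`, the junk value `0`; its logarithm is `0` either way.
    rcases eq_or_ne (margXY P x y * ∑ x, margXY P x y) 0 with h | h
    · rw [h]; simp
    · rw [div_self h]; simp
  · simp [diag, hyz]

/-- if `𝒵 = 𝒴` and the pair marginals of `(X,Y)` and `(X,Z)` coincide, then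
there is no unique information, `S̃I = MI(X:Y) = MI(X:Z)` and `C̃I = MI(X:Y|Z) = MI(X:Z|Y)`. -/
theorem stmt6 [Nonempty 𝒳] [Nonempty 𝒴]
    (P : 𝒳 × 𝒴 × 𝒴 → ℝ) (hP : IsDist P)
    (hmarg : ∀ x y, margXY P x y = margXZ P x y) :
    UIY P = 0 ∧ UIZ P = 0 ∧
    SI P = miXY P ∧ miXY P = miXZ P ∧
    CI P = miXY_Z P ∧ miXY_Z P = miXZ_Y P := by
  have hconst : ∀ Q ∈ ΔP P, miXY Q = miXY P ∧ miXZ Q = miXY P := fun Q hQ => by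
    have h1 := miXY_congr hQ.2.1
    refine ⟨h1, ?_⟩
    rw [← h1]
    exact (miXY_eq_miXZ fun x y => by rw [hQ.2.1, hQ.2.2, hmarg]).symm
  have hXYZ : ∀ Q ∈ ΔP P, miXYZ Q = miXY P + miXY_Z Q := fun Q hQ => by
    rw [miXYZ_eq_miXZ_add_s6 hQ.1.1, (hconst Q hQ).2]
  have hcond : ∀ Q ∈ ΔP P, miXZ_Y Q = miXY_Z Q := fun Q hQ => by
    have h1 := miXYZ_eq_miXY_add_s6 hQ.1.1
    have h2 := hXYZ Q hQ
    have h3 := (hconst Q hQ).1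
    linarith
  have hPmem : P ∈ ΔP P := ⟨hP, fun _ _ => rfl, fun _ _ => rfl⟩
  have hdiag := diag_mem hP hmarg
  have hUI : UIY P = 0 := by
    refine IsLeast.csInf_eq ⟨⟨_, hdiag, miXY_Z_diag P⟩, ?_⟩
    rintro _ ⟨Q, hQ, rfl⟩
    exact miXY_Z_nonneg_s6 hQ.1.1
  have hSI : SI P = miXY P := by
    refine IsGreatest.csSup_eq ⟨⟨_, hdiag, ?_⟩, ?_⟩
    · rw [coI, miXY_Z_diag, (hconst _ hdiag).1, sub_zero]
    · rintro _ ⟨Q, hQ, rfl⟩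
      have h1 := miXY_Z_nonneg_s6 hQ.1.1
      rw [coI, (hconst Q hQ).1]
      linarith
  have hmin : sInf (miXYZ '' ΔP P) = miXY P := by
    refine IsLeast.csInf_eq ⟨⟨_, hdiag, ?_⟩, ?_⟩
    · rw [hXYZ _ hdiag, miXY_Z_diag, add_zero]
    · rintro _ ⟨Q, hQ, rfl⟩
      have h1 := miXY_Z_nonneg_s6 hQ.1.1
      rw [hXYZ Q hQ]
      linarith
  refine ⟨hUI, ?_, hSI, miXY_eq_miXZ hmarg, ?_, (hcond P hPmem).symm⟩
  · rw [UIZ, Set.image_congr hcond]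
    exact hUI
  · rw [CI, hmin, hXYZ P hPmem]
    ring

end PID
end
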